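/- Let n ≥ 1, c_u ∈ (0,1), C_u ∈ (1,∞), and let U ⊊ ℝⁿ be an unbounded (c_u,C_u)-uniform domain with nonempty boundary. Let h : closure(U) → ℝ be continuous, positive and harmonic on U, and identically 0 on ∂U. Then there exists a constant A₁ ∈ (1,∞), depending only on n, c_u and C_u, such that for every x ∈ U, every r > 0, every point x_r ∈ U with d_U(x,x_r) ≤ r/4 and dist(x_r, ∂U) ≥ c_u·r/8, and every y ∈ U with d_U(x,y) < r, one has h(y) ≤ A₁·h(x_r). -/

import Mathlib

open Set Metric MeasureTheory ENNReal

noncomputable section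

abbrev En (n : ℕ) := EuclideanSpace ℝ (Fin n)

/-- The length of the curve `γ : [0,1] → X`, defined as the supremum of sums
`∑ d(γ(t_i), γ(t_{i-1}))` over partitions `0 ≤ t₀ < … < t_k ≤ 1`. -/
def curveLength {X : Type*} [PseudoEMetricSpace X] (γ : ℝ → X) : ℝ≥0∞ :=
  eVariationOn γ (Set.Icc 0 1)

/-- `γ` is a continuous curve in `Ω` from `x` to `y`. -/
def IsCurveIn {X : Type*} [PseudoEMetricSpace X] (Ω : Set X) (x y : X) (γ : ℝ → X) : Prop :=
  ContinuousOn γ (Set.Icc 0 1) ∧ Set.MapsTo γ (Set.Icc 0 1) Ω ∧ γ 0 = x ∧ γ 1 = y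

/-- The inner (pseudo)metric of `Ω`: the infimum of lengths of continuous curves
joining `x` to `y` inside `Ω`. -/
def innerDist {X : Type*} [PseudoEMetricSpace X] (Ω : Set X) (x y : X) : ℝ≥0∞ :=
  ⨅ (γ : ℝ → X) (_ : IsCurveIn Ω x y γ), curveLength γ

/-- `U` is a `(c,C)`-uniform domain in `ℝⁿ`. -/
def IsUniformDomain {n : ℕ} (c C : ℝ) (U : Set (En n)) : Prop :=
  IsOpen U ∧ IsConnected U ∧
    ∀ x ∈ U, ∀ y ∈ U, ∃ γ : ℝ → En n, IsCurveIn U x y γ ∧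
      curveLength γ ≤ ENNReal.ofReal (C * dist x y) ∧
      ∀ t ∈ Set.Icc (0:ℝ) 1,
        c * min (dist x (γ t)) (dist (γ t) y) ≤ Metric.infDist (γ t) (frontier U)

/-- The Laplacian `∑ ∂²f/∂xᵢ²` of `f : ℝⁿ → ℝ`. -/
def lap {n : ℕ} (f : En n → ℝ) (x : En n) : ℝ :=
  ∑ i : Fin n,
    fderiv ℝ (fun y => fderiv ℝ f y (EuclideanSpace.single i 1)) x (EuclideanSpace.single i 1)

/-- `f` is harmonic on the open set `V`: twice continuously differentiable with
vanishing Laplacian. -/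
def IsHarmonicOn {n : ℕ} (f : En n → ℝ) (V : Set (En n)) : Prop :=
  ContDiffOn ℝ 2 f V ∧ ∀ x ∈ V, lap f x = 0

/-!
For a level `a > 0` the function `((h - a)⁺)³`, extended by zero outside `U`, is of class `C²` and
subharmonic on the whole space. If it vanishes on a ball comparable to `B(x, R)` and close to `x`,
then the mean value inequality with the kernel `(1 - |y|²)⁺` shows that its maximum on `B(x, R)`
exceeds its value at `x` by a fixed factor.

Harnack chains give `h ≤ B ^ (k + 1) * h q` at the points whose depth is at least `2 ^ (-k)` times
that of `q`. If `h y` were much larger than `h q`, then, with these bounds as levels, `h` would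
exceed `2 * B ^ (k + 1) * h q` at some point for every large `k`, the points for successive `k`
being at geometrically decreasing distances. This contradicts the boundedness of `h` on compact
subsets of the closure of `U`.
-/

section Calculus

open Filter Topology InnerProductSpace Laplacian Module

lemma hasDerivAt_max_zero_pow (k : ℕ) (t : ℝ) :
    HasDerivAt (fun t : ℝ ↦ max t 0 ^ (k + 2)) ((k + 2) * max t 0 ^ (k + 1)) t := by
  refine hasDerivAt_of_hasDerivAt_of_ne' (g := fun t ↦ (k + 2) * max t 0 ^ (k + 1)) (x := 0)
    (fun s hs ↦ ?_) (by fun_prop) (by fun_prop) t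
  rcases lt_or_gt_of_ne hs with hneg | hpos
  · have hzero : (fun t : ℝ ↦ max t 0 ^ (k + 2)) =ᶠ[𝓝 s] fun _ ↦ 0 := by
      filter_upwards [Iio_mem_nhds hneg] with t ht
      simp [max_eq_right (mem_Iio.1 ht).le]
    simpa [max_eq_right hneg.le] using (hasDerivAt_const s (0 : ℝ)).congr_of_eventuallyEq hzero
  · have hpow : (fun t : ℝ ↦ max t 0 ^ (k + 2)) =ᶠ[𝓝 s] fun t ↦ t ^ (k + 2) := by
      filter_upwards [Ioi_mem_nhds hpos] with t ht
      rw [max_eq_left (mem_Ioi.1 ht).le]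
    simpa [max_eq_left hpos.le] using (hasDerivAt_pow (k + 2) s).congr_of_eventuallyEq hpow

lemma deriv_max_zero_pow (k : ℕ) :
    deriv (fun t : ℝ ↦ max t 0 ^ (k + 2)) = fun t : ℝ ↦ (k + 2) * max t 0 ^ (k + 1) :=
  funext fun t ↦ (hasDerivAt_max_zero_pow k t).deriv

lemma contDiff_max_zero_pow (k : ℕ) : ContDiff ℝ k (fun t : ℝ ↦ max t 0 ^ (k + 1)) := by
  induction k with
  | zero => exact contDiff_zero.2 (by fun_prop)
  | succ k ih =>
    push_cast
    refine contDiff_succ_iff_deriv.2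
      ⟨fun t ↦ (hasDerivAt_max_zero_pow k t).differentiableAt, by simp, ?_⟩
    rw [deriv_max_zero_pow]
    exact contDiff_const.mul ih

variable {E : Type*} [NormedAddCommGroup E] [InnerProductSpace ℝ E] [FiniteDimensional ℝ E]

lemma laplacian_eq_sum_fderiv_fderiv {ι : Type*} [Fintype ι] (b : OrthonormalBasis ι ℝ E)
    (f : E → ℝ) (x : E) : Δ f x = ∑ i, fderiv ℝ (fderiv ℝ f) x (b i) (b i) := by
  simp [laplacian_eq_iteratedFDeriv_orthonormalBasis f b, iteratedFDeriv_two_apply]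

lemma sum_sq_apply_eq_norm_sq {ι : Type*} [Fintype ι] (b : OrthonormalBasis ι ℝ E)
    (ℓ : E →L[ℝ] ℝ) : ∑ i, ℓ (b i) ^ 2 = ‖ℓ‖ ^ 2 := by
  have hℓ : ∀ v, ℓ v = ⟪v, (toDual ℝ E).symm ℓ⟫_ℝ := fun v ↦ by
    rw [real_inner_comm, toDual_symm_apply]
  simpa [← hℓ] using b.sum_sq_norm_inner_right ((toDual ℝ E).symm ℓ)

lemma laplacian_comp_eq {F : ℝ → ℝ} {f : E → ℝ} {x : E} (hF : ContDiff ℝ 2 F)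
    (hf : ContDiffAt ℝ 2 f x) :
    Δ (fun z ↦ F (f z)) x = deriv F (f x) * Δ f x + deriv (deriv F) (f x) * ‖fderiv ℝ f x‖ ^ 2 := by
  have hF' : Differentiable ℝ (deriv F) :=
    (contDiff_succ_iff_deriv.1 (show ContDiff ℝ (1 + 1) F from hF)).2.2.differentiable (by simp)
  have hf' : DifferentiableAt ℝ (fderiv ℝ f) x :=
    (hf.fderiv_right (m := 1) (by norm_num)).differentiableAt (by simp)
  have hfirst : fderiv ℝ (fun z ↦ F (f z)) =ᶠ[𝓝 x] fun z ↦ deriv F (f z) • fderiv ℝ f z := by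
    filter_upwards [hf.eventually (by simp)] with z hz
    exact ((hF.differentiable (by simp) (f z)).hasDerivAt.comp_hasFDerivAt z
      (hz.differentiableAt (by simp)).hasFDerivAt).fderiv
  have hsecond := ((hF' (f x)).hasDerivAt.comp_hasFDerivAt x
    (hf.differentiableAt (by simp)).hasFDerivAt).smul hf'.hasFDerivAt
  have hfderiv : fderiv ℝ (fderiv ℝ (fun z ↦ F (f z))) x = _ :=
    hfirst.fderiv_eq.trans hsecond.fderiv
  rw [laplacian_eq_sum_fderiv_fderiv (stdOrthonormalBasis ℝ E),
    laplacian_eq_sum_fderiv_fderiv (stdOrthonormalBasis ℝ E),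
    ← sum_sq_apply_eq_norm_sq (stdOrthonormalBasis ℝ E), Finset.mul_sum, Finset.mul_sum,
    ← Finset.sum_add_distrib]
  refine Finset.sum_congr rfl fun i _ ↦ ?_
  simp [hfderiv]
  ring

lemma laplacian_comp_add_smul {f : E → ℝ} (hf : ContDiff ℝ 2 f) (x : E) (s : ℝ) (y : E) :
    Δ (fun y ↦ f (x + s • y)) y = s ^ 2 * Δ f (x + s • y) := by
  have hshift : ∀ y : E, HasFDerivAt (fun y ↦ x + s • y) (s • ContinuousLinearMap.id ℝ E) y :=
    fun y ↦ ((hasFDerivAt_id y).const_smul s).const_add x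
  have hfirst : fderiv ℝ (fun y ↦ f (x + s • y)) = fun y ↦ s • fderiv ℝ f (x + s • y) := by
    ext1 y
    have := ((hf.differentiable (by simp) (x + s • y)).hasFDerivAt.comp y (hshift y)).fderiv
    simpa [Function.comp_def] using this
  have hsecond := (((hf.fderiv_right (m := 1) (by norm_num)).differentiable (by simp)
    (x + s • y)).hasFDerivAt.comp y (hshift y)).const_smul s
  have hfderiv : fderiv ℝ (fderiv ℝ (fun y ↦ f (x + s • y))) y = _ :=
    (congrArg (fderiv ℝ · y) hfirst).trans hsecond.fderiv
  rw [laplacian_eq_sum_fderiv_fderiv (stdOrthonormalBasis ℝ E),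
    laplacian_eq_sum_fderiv_fderiv (stdOrthonormalBasis ℝ E), Finset.mul_sum]
  refine Finset.sum_congr rfl fun i _ ↦ ?_
  simp [hfderiv]
  ring

lemma exists_contDiff_eqOn_ball {m : ℕ∞} {f : E → ℝ} {x : E} {r R : ℝ} (hr : 0 < r) (hrR : r < R)
    (hf : ContDiffOn ℝ m f (ball x R)) : ∃ g : E → ℝ, ContDiff ℝ m g ∧ EqOn g f (ball x r) := by
  let χ : ContDiffBump x := ⟨r, (r + R) / 2, hr, by linarith⟩
  refine ⟨fun z ↦ χ z * f z, contDiff_iff_contDiffAt.2 fun p ↦ ?_, fun z hz ↦ ?_⟩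
  · by_cases hp : p ∈ ball x R
    · exact χ.contDiff.contDiffAt.mul (hf.contDiffAt (isOpen_ball.mem_nhds hp))
    · have hp' : p ∉ tsupport χ := by
        rw [χ.tsupport_eq, mem_closedBall]
        have : R ≤ dist p x := not_lt.1 hp
        simp only [χ]
        linarith
      have hzero : (fun z ↦ χ z * f z) =ᶠ[𝓝 p] fun _ ↦ 0 := by
        filter_upwards [notMem_tsupport_iff_eventuallyEq.1 hp'] with z hz
        simp [hz]
      exact contDiffAt_const.congr_of_eventuallyEq hzero
  · simp [χ.one_of_mem_closedBall (ball_subset_closedBall hz)]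

end Calculus

section Kernel

variable {E : Type*} [NormedAddCommGroup E]

/-- The Epanechnikov kernel `(1 - ‖y‖²)⁺`, not normalised to have integral one. As a weight for
averages of subharmonic functions it is convenient because `epanechnikov y • y` is the gradient of
`-(epanechnikov y) ^ 2 / 4`. -/
def epanechnikov (y : E) : ℝ := max (1 - ‖y‖ ^ 2) 0

lemma epanechnikov_nonneg (y : E) : 0 ≤ epanechnikov y := le_max_right _ _

lemma epanechnikov_le_one (y : E) : epanechnikov y ≤ 1 :=
  max_le (sub_le_self 1 (sq_nonneg ‖y‖)) zero_le_one

lemma epanechnikov_eq_zero {y : E} (hy : 1 ≤ ‖y‖) : epanechnikov y = 0 :=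
  max_eq_right (sub_nonpos.2 (one_le_pow₀ hy))

lemma three_fourths_le_epanechnikov {y : E} (hy : ‖y‖ ≤ 1 / 2) : 3 / 4 ≤ epanechnikov y :=
  le_max_of_le_left (by nlinarith [norm_nonneg y])

@[fun_prop]
lemma continuous_epanechnikov : Continuous (epanechnikov : E → ℝ) := by
  unfold epanechnikov
  fun_prop

lemma hasCompactSupport_epanechnikov [ProperSpace E] : HasCompactSupport (epanechnikov : E → ℝ) :=
  HasCompactSupport.intro (isCompact_closedBall 0 1) fun _ hy ↦
    epanechnikov_eq_zero (by simpa using (not_le.1 (mt mem_closedBall.2 hy)).le)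

variable [NormedSpace ℝ E]

/-- The Epanechnikov kernel transported to the ball of centre `x` and radius `r`. -/
def ballKernel (x : E) (r : ℝ) (z : E) : ℝ := epanechnikov (r⁻¹ • (z - x))

lemma ballKernel_nonneg (x : E) (r : ℝ) (z : E) : 0 ≤ ballKernel x r z := epanechnikov_nonneg _

@[fun_prop]
lemma continuous_ballKernel (x : E) (r : ℝ) : Continuous (ballKernel x r) := by
  unfold ballKernel
  fun_prop

lemma norm_inv_smul_sub {r : ℝ} (hr : 0 < r) (x z : E) : ‖r⁻¹ • (z - x)‖ = dist z x / r := by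
  rw [norm_smul, norm_inv, Real.norm_of_nonneg hr.le, dist_eq_norm, div_eq_inv_mul]

lemma ballKernel_eq_zero {r : ℝ} (hr : 0 < r) {x z : E} (hz : z ∉ ball x r) :
    ballKernel x r z = 0 :=
  epanechnikov_eq_zero (by rwa [norm_inv_smul_sub hr, one_le_div hr, ← not_lt])

lemma three_fourths_le_ballKernel {r : ℝ} (hr : 0 < r) {x z : E} (hz : dist z x ≤ r / 2) :
    3 / 4 ≤ ballKernel x r z :=
  three_fourths_le_epanechnikov (by rw [norm_inv_smul_sub hr, div_le_iff₀ hr]; linarith)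

lemma ballKernel_le_mul_ballKernel {r ρ : ℝ} (hρ : 0 < ρ) {x y : E} (hy : dist y x + ρ ≤ r / 2)
    (z : E) : ballKernel y ρ z ≤ 4 / 3 * ballKernel x r z := by
  by_cases hz : z ∈ ball y ρ
  · have hzx : dist z x ≤ r / 2 := by
      linarith [dist_triangle z y x, mem_ball.1 hz]
    have hr : 0 < r := by linarith [dist_nonneg (x := y) (y := x)]
    linarith [three_fourths_le_ballKernel hr hzx,
      show ballKernel y ρ z ≤ 1 from epanechnikov_le_one _]
  · rw [ballKernel_eq_zero hρ hz]
    exact mul_nonneg (by norm_num) (ballKernel_nonneg x r z)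

end Kernel

section MeanValue

open Filter Topology InnerProductSpace Laplacian Module

variable {E : Type*} [NormedAddCommGroup E] [InnerProductSpace ℝ E]

lemma contDiff_epanechnikov_sq : ContDiff ℝ 1 fun y : E ↦ epanechnikov y ^ 2 :=
  (contDiff_max_zero_pow 1).comp (contDiff_const.sub (contDiff_norm_sq ℝ))

lemma fderiv_epanechnikov_sq (y v : E) :
    fderiv ℝ (fun y : E ↦ epanechnikov y ^ 2) y v = -(4 * epanechnikov y * ⟪y, v⟫_ℝ) := by
  have hsub : HasFDerivAt (fun y : E ↦ 1 - ‖y‖ ^ 2) (-(2 • innerSL ℝ y)) y :=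
    (hasStrictFDerivAt_norm_sq y).hasFDerivAt.const_sub 1
  have hcomp : HasFDerivAt (fun y : E ↦ epanechnikov y ^ 2) _ y :=
    (hasDerivAt_max_zero_pow 0 _).comp_hasFDerivAt y hsub
  rw [hcomp.fderiv]
  simp [epanechnikov]
  ring

variable [FiniteDimensional ℝ E] [MeasurableSpace E] [BorelSpace E]

lemma integral_epanechnikov_pos : 0 < ∫ y : E, epanechnikov y :=
  continuous_epanechnikov.integral_pos_of_hasCompactSupport_nonneg_nonzero
    hasCompactSupport_epanechnikov epanechnikov_nonneg (x := 0) (by simp [epanechnikov])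

lemma integral_mul_ballKernel {r : ℝ} (hr : 0 < r) (w : E → ℝ) (x : E) :
    ∫ z, w z * ballKernel x r z = r ^ finrank ℝ E * ∫ y, w (x + r • y) * epanechnikov y := by
  rw [← smul_eq_mul (r ^ _), ← Measure.integral_comp_inv_smul_of_nonneg _ _ hr.le,
    ← integral_add_left_eq_self _ x]
  simp [smul_inv_smul₀ hr.ne', ballKernel]

lemma integral_ballKernel {r : ℝ} (hr : 0 < r) (x : E) :
    ∫ z, ballKernel x r z = r ^ finrank ℝ E * ∫ y : E, epanechnikov y := by
  simpa using integral_mul_ballKernel hr 1 x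

lemma integrable_mul_ballKernel {w : E → ℝ} {x : E} {r R : ℝ} (hr : 0 < r) (hrR : r < R)
    (hw : ContinuousOn w (ball x R)) : Integrable fun z ↦ w z * ballKernel x r z := by
  have hcont : ContinuousOn (fun z ↦ w z * ballKernel x r z) (closedBall x r) :=
    (hw.mono (closedBall_subset_ball hrR)).mul (continuous_ballKernel x r).continuousOn
  refine (hcont.integrableOn_compact (isCompact_closedBall x r)).integrable_of_forall_notMem_eq_zero
    fun z hz ↦ ?_
  rw [ballKernel_eq_zero hr (mt (ball_subset_closedBall ·) hz), mul_zero]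

lemma integral_sum_fderiv_mul_fderiv_eq_neg {ι : Type*} [Fintype ι] (b : OrthonormalBasis ι ℝ E)
    {f φ : E → ℝ} (hf : ContDiff ℝ 2 f) (hφ : ContDiff ℝ 1 φ) (hφc : HasCompactSupport φ) :
    ∫ y, ∑ i, fderiv ℝ f y (b i) * fderiv ℝ φ y (b i) = -∫ y, Δ f y * φ y := by
  have hf' : ∀ v, ContDiff ℝ 1 fun y ↦ fderiv ℝ f y v := fun v ↦
    (hf.fderiv_right (by norm_num)).clm_apply contDiff_const
  have hf'' : ∀ y v, fderiv ℝ (fun z ↦ fderiv ℝ f z v) y v = fderiv ℝ (fderiv ℝ f) y v v :=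
    fun y v ↦ by
      rw [fderiv_clm_apply ((hf.fderiv_right (m := 1) (by norm_num)).differentiable (by simp) y)
        (differentiableAt_const v)]
      simp
  have hint : ∀ v, Integrable fun y ↦ fderiv ℝ f y v * fderiv ℝ φ y v := fun v ↦
    ((hf' v).continuous.mul (hφ.continuous_fderiv_apply (by simp) |>.comp
      (Continuous.prodMk_left v))).integrable_of_hasCompactSupport
      (hφc.fderiv_apply (𝕜 := ℝ) v).mul_left
  have hint' : ∀ v, Integrable fun y ↦ fderiv ℝ (fderiv ℝ f) y v v * φ y := fun v ↦ by
    simp_rw [← hf'']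
    exact (((hf' v).continuous_fderiv_apply (by simp) |>.comp
      (Continuous.prodMk_left v)).mul hφ.continuous).integrable_of_hasCompactSupport hφc.mul_left
  have hparts : ∀ v, ∫ y, fderiv ℝ f y v * fderiv ℝ φ y v
      = -∫ y, fderiv ℝ (fderiv ℝ f) y v v * φ y := fun v ↦ by
    simp_rw [← hf'']
    refine integral_mul_fderiv_eq_neg_fderiv_mul_of_integrable (by simpa only [hf''] using hint' v)
      (hint v) ?_ (fun y _ ↦ (hf' v).differentiable (by simp) y)
      fun y _ ↦ hφ.differentiable (by simp) y
    exact ((hf' v).continuous.mul hφ.continuous).integrable_of_hasCompactSupport hφc.mul_left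
  simp_rw [laplacian_eq_sum_fderiv_fderiv b f, Finset.sum_mul]
  rw [integral_finsetSum _ fun i _ ↦ hint (b i), integral_finsetSum _ fun i _ ↦ hint' (b i),
    ← Finset.sum_neg_distrib]
  exact Finset.sum_congr rfl fun i _ ↦ hparts (b i)

lemma integral_fderiv_apply_self_mul_epanechnikov {f : E → ℝ} (hf : ContDiff ℝ 2 f) :
    ∫ y, fderiv ℝ f y y * epanechnikov y = 1 / 4 * ∫ y, Δ f y * epanechnikov y ^ 2 := by
  let b := stdOrthonormalBasis ℝ E
  have hexpand : ∀ y, fderiv ℝ f y y = ∑ i, fderiv ℝ f y (b i) * ⟪y, b i⟫_ℝ := fun y ↦ by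
    simpa [real_inner_comm, mul_comm] using congrArg (fderiv ℝ f y) (b.sum_repr' y).symm
  have hgradient : ∀ y, fderiv ℝ f y y * epanechnikov y = -(1 / 4) *
      ∑ i, fderiv ℝ f y (b i) * fderiv ℝ (fun y ↦ epanechnikov y ^ 2) y (b i) := fun y ↦ by
    simp_rw [hexpand, fderiv_epanechnikov_sq, Finset.mul_sum, Finset.sum_mul]
    exact Finset.sum_congr rfl fun i _ ↦ by ring
  have hsupp : HasCompactSupport fun y : E ↦ epanechnikov y ^ 2 :=
    hasCompactSupport_epanechnikov.comp_left (g := (· ^ 2)) (by simp)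
  simp_rw [hgradient]
  rw [integral_const_mul, integral_sum_fderiv_mul_fderiv_eq_neg b hf contDiff_epanechnikov_sq hsupp]
  ring

lemma hasDerivAt_integral_comp_add_smul_mul {w ψ : E → ℝ} (hw : ContDiff ℝ 1 w)
    (hψ : Continuous ψ) (hψc : HasCompactSupport ψ) (x : E) (s : ℝ) :
    HasDerivAt (fun s : ℝ ↦ ∫ y, w (x + s • y) * ψ y) (∫ y, fderiv ℝ w (x + s • y) y * ψ y) s := by
  have hwc : Continuous w := hw.continuous
  have hw' : Continuous (fderiv ℝ w) := hw.continuous_fderiv (by simp)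
  obtain ⟨B, hB⟩ := ((isCompact_closedBall s 1).prod hψc).exists_bound_of_continuousOn
    (f := fun p : ℝ × E ↦ fderiv ℝ w (x + p.1 • p.2) p.2 * ψ p.2)
    (Continuous.continuousOn (by fun_prop))
  refine (hasDerivAt_integral_of_dominated_loc_of_deriv_le
    (F := fun s y ↦ w (x + s • y) * ψ y) (F' := fun s y ↦ fderiv ℝ w (x + s • y) y * ψ y)
    (bound := (tsupport ψ).indicator fun _ ↦ B) (ball_mem_nhds s one_pos)
    (.of_forall fun t ↦ Continuous.aestronglyMeasurable (by fun_prop))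
    (Continuous.integrable_of_hasCompactSupport (by fun_prop) hψc.mul_left)
    (Continuous.aestronglyMeasurable (by fun_prop))
    (.of_forall fun y t ht ↦ ?_) ?_ (.of_forall fun y t _ ↦ ?_)).2
  · by_cases hy : y ∈ tsupport ψ
    · rw [indicator_of_mem hy]
      exact hB (t, y) ⟨ball_subset_closedBall ht, hy⟩
    · rw [indicator_of_notMem hy, image_eq_zero_of_notMem_tsupport hy, mul_zero, norm_zero]
  · exact (integrable_indicator_iff (isClosed_tsupport ψ).measurableSet).2
      (integrableOn_const hψc.measure_lt_top.ne)
  · have hline : HasDerivAt (fun t : ℝ ↦ x + t • y) y t := by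
      simpa using ((hasDerivAt_id t).smul_const y).const_add x
    exact ((hw.differentiable (by simp) _).hasFDerivAt.comp_hasDerivAt t hline).mul_const _

lemma deriv_integral_comp_add_smul_mul_epanechnikov {w : E → ℝ} (hw : ContDiff ℝ 2 w) (x : E)
    {s : ℝ} (hs : 0 < s) : deriv (fun s : ℝ ↦ ∫ y, w (x + s • y) * epanechnikov y) s =
      s / 4 * ∫ y, Δ w (x + s • y) * epanechnikov y ^ 2 := by
  have hshift : ContDiff ℝ 2 fun y ↦ w (x + s • y) := by fun_prop
  have hradial : ∀ y, fderiv ℝ w (x + s • y) y = s⁻¹ * fderiv ℝ (fun y ↦ w (x + s • y)) y y :=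
    fun y ↦ by
      have hline : HasFDerivAt (fun y ↦ x + s • y) (s • ContinuousLinearMap.id ℝ E) y :=
        ((hasFDerivAt_id y).const_smul s).const_add x
      have hcomp : HasFDerivAt (fun y ↦ w (x + s • y)) _ y :=
        (hw.differentiable (by simp) (x + s • y)).hasFDerivAt.comp y hline
      simp [hcomp.fderiv, hs.ne']
  rw [(hasDerivAt_integral_comp_add_smul_mul (hw.of_le (by norm_num)) continuous_epanechnikov
    hasCompactSupport_epanechnikov x s).deriv]
  simp_rw [hradial, mul_assoc]
  rw [integral_const_mul, integral_fderiv_apply_self_mul_epanechnikov hshift]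
  simp_rw [laplacian_comp_add_smul hw, mul_assoc]
  rw [integral_const_mul]
  field_simp

lemma mul_integral_epanechnikov_le {w : E → ℝ} (hw : ContDiff ℝ 2 w) {x : E} {r : ℝ} (hr : 0 ≤ r)
    (hΔ : ∀ z ∈ ball x r, 0 ≤ Δ w z) :
    w x * ∫ y : E, epanechnikov y ≤ ∫ y, w (x + r • y) * epanechnikov y := by
  have hderiv := hasDerivAt_integral_comp_add_smul_mul (hw.of_le one_le_two)
    continuous_epanechnikov hasCompactSupport_epanechnikov x
  have hmono : MonotoneOn (fun s : ℝ ↦ ∫ y, w (x + s • y) * epanechnikov y) (Icc 0 r) := by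
    refine monotoneOn_of_deriv_nonneg (convex_Icc 0 r)
      (fun s _ ↦ (hderiv s).continuousAt.continuousWithinAt)
      (fun s _ ↦ (hderiv s).differentiableAt.differentiableWithinAt) fun s hs ↦ ?_
    rw [interior_Icc] at hs
    rw [deriv_integral_comp_add_smul_mul_epanechnikov hw x hs.1]
    refine mul_nonneg (by linarith [hs.1]) (integral_nonneg fun y ↦ ?_)
    by_cases hy : ‖y‖ < 1
    · refine mul_nonneg (hΔ _ ?_) (sq_nonneg _)
      rw [mem_ball, dist_self_add_left, norm_smul, Real.norm_of_nonneg hs.1.le]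
      nlinarith [hs.1, hs.2, norm_nonneg y]
    · simp [epanechnikov_eq_zero (not_lt.1 hy)]
  simpa [integral_const_mul] using hmono (left_mem_Icc.2 hr) (right_mem_Icc.2 hr) hr

lemma mul_integral_ballKernel_le {w : E → ℝ} {x : E} {r R : ℝ} (hr : 0 < r) (hrR : r < R)
    (hw : ContDiffOn ℝ 2 w (ball x R)) (hΔ : ∀ z ∈ ball x r, 0 ≤ Δ w z) :
    w x * ∫ z, ballKernel x r z ≤ ∫ z, w z * ballKernel x r z := by
  obtain ⟨g, hg, hgw⟩ := exists_contDiff_eqOn_ball (m := 2) hr hrR hw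
  have hΔg : ∀ z ∈ ball x r, 0 ≤ Δ g z := fun z hz ↦ by
    rw [(laplacian_congr_nhds (hgw.eventuallyEq_of_mem (isOpen_ball.mem_nhds hz))).eq_of_nhds]
    exact hΔ z hz
  have hkernel : ∀ z, w z * ballKernel x r z = g z * ballKernel x r z := fun z ↦ by
    by_cases hz : z ∈ ball x r
    · rw [hgw hz]
    · simp [ballKernel_eq_zero hr hz]
  simp_rw [hkernel]
  rw [integral_ballKernel hr, integral_mul_ballKernel hr, ← hgw (mem_ball_self hr), mul_left_comm]
  gcongr
  exact mul_integral_epanechnikov_le hg hr.le hΔg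

lemma integral_mul_ballKernel_le {g : E → ℝ} {x y : E} {r R ρ : ℝ} (hρ : 0 < ρ) (hrR : r < R)
    (hg : ContDiffOn ℝ 2 g (ball x R)) (hΔ : ∀ z ∈ ball x r, Δ g z ≤ 0)
    (hnonneg : ∀ z ∈ ball x r, 0 ≤ g z) (hy : dist y x + ρ ≤ r / 2) :
    ∫ z, g z * ballKernel y ρ z ≤ 4 / 3 * (g x * ∫ z, ballKernel x r z) := by
  have hr : 0 < r := by linarith [dist_nonneg (x := y) (y := x)]
  have hball : ball y ρ ⊆ ball x r := ball_subset_ball' (by linarith)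
  have hsuper : ∫ z, g z * ballKernel x r z ≤ g x * ∫ z, ballKernel x r z := by
    have := mul_integral_ballKernel_le hr hrR hg.neg fun z hz ↦ by
      change 0 ≤ Δ (-g) z
      simpa [laplacian_neg] using hΔ z hz
    simpa [integral_neg] using this
  calc ∫ z, g z * ballKernel y ρ z ≤ ∫ z, 4 / 3 * (g z * ballKernel x r z) := by
        refine integral_mono_of_nonneg (.of_forall fun z ↦ ?_)
          ((integrable_mul_ballKernel hr hrR hg.continuousOn).const_mul _) (.of_forall fun z ↦ ?_)
        · by_cases hz : z ∈ ball y ρ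
          · exact mul_nonneg (hnonneg z (hball hz)) (ballKernel_nonneg y ρ z)
          · simp [ballKernel_eq_zero hρ hz]
        · by_cases hz : z ∈ ball x r
          · refine le_of_le_of_eq ?_ (mul_left_comm (g z) _ _)
            exact mul_le_mul_of_nonneg_left (ballKernel_le_mul_ballKernel hρ hy z) (hnonneg z hz)
          · simp [ballKernel_eq_zero hr hz, ballKernel_eq_zero hρ (mt (hball ·) hz)]
    _ ≤ 4 / 3 * (g x * ∫ z, ballKernel x r z) := by
        rw [integral_const_mul]
        gcongr

lemma harnack_inequality {h : E → ℝ} {x y : E} {R : ℝ} (hh : HarmonicOnNhd h (ball x R))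
    (hnonneg : ∀ z ∈ ball x R, 0 ≤ h z) (hR : 0 < R) (hy : dist y x ≤ R / 8) :
    h y ≤ 4 / 3 * 4 ^ finrank ℝ E * h x := by
  have hΔ : ∀ z ∈ ball x R, Δ h z = 0 := fun z hz ↦ (hh z hz).2.eq_of_nhds
  have hsub : ball y (R / 4) ⊆ ball x R := ball_subset_ball' (by linarith)
  have hchain : h y * ∫ z, ballKernel y (R / 8) z ≤ 4 / 3 * (h x * ∫ z, ballKernel x (R / 2) z) :=
    (mul_integral_ballKernel_le (by linarith) (by linarith : R / 8 < R / 4)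
      (hh.contDiffOn.mono hsub) fun z hz ↦
        (hΔ z (hsub (ball_subset_ball (by linarith) hz))).ge).trans
    (integral_mul_ballKernel_le (by linarith) (by linarith : R / 2 < R) hh.contDiffOn
      (fun z hz ↦ (hΔ z (ball_subset_ball (by linarith) hz)).le)
      (fun z hz ↦ hnonneg z (ball_subset_ball (by linarith) hz)) (by linarith))
  rw [integral_ballKernel (by linarith), integral_ballKernel (by linarith),
    show R / 2 = 4 * (R / 8) by ring, mul_pow] at hchain
  have hpos : 0 < (R / 8) ^ finrank ℝ E * ∫ y : E, epanechnikov y :=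
    mul_pos (by positivity) integral_epanechnikov_pos
  refine le_of_mul_le_mul_right (hchain.trans_eq ?_) hpos
  ring

lemma one_add_mul_le_of_eqOn_zero {w : E → ℝ} {x z : E} {R κ M : ℝ} (hw : ContDiff ℝ 2 w)
    (hΔ : ∀ p, 0 ≤ Δ w p) (hR : 0 < R) (hκ : 0 < κ) (hz : dist z x + κ * R ≤ R / 2)
    (hM : ∀ p ∈ ball x R, w p ≤ M) (hzero : ∀ p ∈ ball z (κ * R), w p = 0) :
    (1 + 3 / 4 * κ ^ finrank ℝ E) * w x ≤ M := by
  have hκR : 0 < κ * R := mul_pos hκ hR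
  have hΔ' : ∀ p ∈ ball x R, Δ (fun q ↦ M - w q) p ≤ 0 := fun p _ ↦ by
    have hsub := (contDiffAt_const (c := M)).laplacian_sub (hw.contDiffAt (x := p))
    exact hsub.trans_le (by simpa using hΔ p)
  have hcompare := integral_mul_ballKernel_le hκR (lt_add_one R)
    (contDiff_const.sub hw).contDiffOn hΔ' (fun p hp ↦ sub_nonneg.2 (hM p hp)) hz
  have hflat : ∀ p, (M - w p) * ballKernel z (κ * R) p = M * ballKernel z (κ * R) p := fun p ↦ by
    by_cases hp : p ∈ ball z (κ * R)
    · rw [hzero p hp, sub_zero]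
    · simp [ballKernel_eq_zero hκR hp]
  simp_rw [hflat] at hcompare
  rw [integral_const_mul, integral_ballKernel hκR, integral_ballKernel hR, mul_pow] at hcompare
  have hpos : 0 < R ^ finrank ℝ E * ∫ y : E, epanechnikov y :=
    mul_pos (by positivity) integral_epanechnikov_pos
  have hgap : M * κ ^ finrank ℝ E ≤ 4 / 3 * (M - w x) :=
    le_of_mul_le_mul_right (by linarith) hpos
  have hwx : w x * κ ^ finrank ℝ E ≤ M * κ ^ finrank ℝ E := by
    gcongr
    exact hM x (mem_ball_self hR)
  linarith

end MeanValue

section Truncation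

open Filter Topology InnerProductSpace Laplacian Module

/-- The function `((h - a)⁺)³` on `U`, extended by zero. The cube, rather than the first power,
makes the truncation of a subharmonic function twice continuously differentiable. -/
def truncCube {X : Type*} (U : Set X) (h : X → ℝ) (a : ℝ) : X → ℝ :=
  U.indicator fun z ↦ max (h z - a) 0 ^ 3

lemma truncCube_eq_zero {X : Type*} {U : Set X} {h : X → ℝ} {a : ℝ} {z : X}
    (hz : z ∈ U → h z ≤ a) : truncCube U h a z = 0 :=
  indicator_apply_eq_zero.2 fun hzU ↦ by simp [max_eq_right (sub_nonpos.2 (hz hzU))]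

lemma truncCube_eq_sub_pow {X : Type*} {U : Set X} {h : X → ℝ} {a : ℝ} {z : X} (hz : z ∈ U)
    (ha : a ≤ h z) : truncCube U h a z = (h z - a) ^ 3 := by
  rw [truncCube, indicator_of_mem hz, max_eq_left (sub_nonneg.2 ha)]

lemma truncCube_eventuallyEq_zero {X : Type*} [TopologicalSpace X] {U : Set X} {h : X → ℝ} {a : ℝ}
    {p : X} (hU : IsOpen U) (hc : ContinuousOn h (closure U)) (hb : ∀ z ∈ frontier U, h z < a)
    (hp : p ∉ U) : truncCube U h a =ᶠ[𝓝 p] fun _ ↦ 0 := by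
  by_cases hpcl : p ∈ closure U
  · have hlt : ∀ᶠ z in 𝓝[closure U] p, h z < a :=
      (hc p hpcl).eventually_lt continuousWithinAt_const (hb p (hU.frontier_eq ▸ ⟨hpcl, hp⟩))
    filter_upwards [eventually_nhdsWithin_iff.1 hlt] with z hz
    exact truncCube_eq_zero fun hzU ↦ (hz (subset_closure hzU)).le
  · filter_upwards [isClosed_closure.isOpen_compl.mem_nhds hpcl] with z hz
    exact indicator_of_notMem (fun hzU ↦ hz (subset_closure hzU)) _

variable {E : Type*} [NormedAddCommGroup E] [InnerProductSpace ℝ E] {U : Set E}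
  {h : E → ℝ} {a : ℝ}

lemma contDiff_truncCube (hU : IsOpen U) (hc : ContinuousOn h (closure U))
    (hb : ∀ z ∈ frontier U, h z < a) (hh : ContDiffOn ℝ 2 h U) :
    ContDiff ℝ 2 (truncCube U h a) := by
  refine contDiff_iff_contDiffAt.2 fun p ↦ ?_
  by_cases hp : p ∈ U
  · exact ((contDiff_max_zero_pow 2).contDiffAt.comp p
      ((hh.contDiffAt (hU.mem_nhds hp)).sub contDiffAt_const)).congr_of_eventuallyEq
      ((eqOn_indicator).eventuallyEq_of_mem (hU.mem_nhds hp))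
  · exact contDiffAt_const.congr_of_eventuallyEq (truncCube_eventuallyEq_zero hU hc hb hp)

variable [FiniteDimensional ℝ E]

lemma laplacian_truncCube_nonneg (hU : IsOpen U) (hc : ContinuousOn h (closure U))
    (hb : ∀ z ∈ frontier U, h z < a) (hh : ContDiffOn ℝ 2 h U) (hΔ : ∀ z ∈ U, 0 ≤ Δ h z) (p : E) :
    0 ≤ Δ (truncCube U h a) p := by
  by_cases hp : p ∈ U
  · have hhp : ContDiffAt ℝ 2 h p := hh.contDiffAt (hU.mem_nhds hp)
    have hlocal : truncCube U h a =ᶠ[𝓝 p] fun z ↦ max (h z - a) 0 ^ 3 :=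
      eqOn_indicator.eventuallyEq_of_mem (hU.mem_nhds hp)
    have hΔsub : Δ (fun z ↦ h z - a) p = Δ h p :=
      (hhp.laplacian_sub (contDiffAt_const (c := a))).trans (by simp)
    rw [(laplacian_congr_nhds hlocal).eq_of_nhds, laplacian_comp_eq (F := fun t ↦ max t 0 ^ 3)
      (contDiff_max_zero_pow 2) (hhp.sub contDiffAt_const), deriv_max_zero_pow 1, hΔsub]
    have hΔp : 0 ≤ Δ h p := hΔ p hp
    have hF'' : 0 ≤ deriv (fun t : ℝ ↦ (((1 : ℕ) : ℝ) + 2) * max t 0 ^ (1 + 1)) (h p - a) := by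
      rw [deriv_const_mul_field, deriv_max_zero_pow 0]
      positivity
    positivity
  · rw [(laplacian_congr_nhds (truncCube_eventuallyEq_zero hU hc hb hp)).eq_of_nhds]
    simp

lemma exists_one_add_mul_sub_pow_le [MeasurableSpace E] [BorelSpace E] (hU : IsOpen U)
    (hc : ContinuousOn h (closure U)) (hb : ∀ z ∈ frontier U, h z < a) (hh : ContDiffOn ℝ 2 h U)
    (hΔ : ∀ z ∈ U, 0 ≤ Δ h z) {x z : E} {R κ : ℝ} (hR : 0 < R) (hκ : 0 < κ)
    (hz : dist z x + κ * R ≤ R / 2) (hle : ∀ p ∈ U ∩ ball z (κ * R), h p ≤ a) (hx : x ∈ U)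
    (hax : a < h x) : ∃ x' ∈ U, a < h x' ∧ dist x' x ≤ R ∧
      (1 + 3 / 4 * κ ^ finrank ℝ E) * (h x - a) ^ 3 ≤ (h x' - a) ^ 3 := by
  have hw := contDiff_truncCube hU hc hb hh
  obtain ⟨x', hx'R, hmax⟩ := (isCompact_closedBall x R).exists_isMaxOn
    ⟨x, mem_closedBall_self hR.le⟩ hw.continuous.continuousOn
  have hgain : (1 + 3 / 4 * κ ^ finrank ℝ E) * (h x - a) ^ 3 ≤ truncCube U h a x' := by
    rw [← truncCube_eq_sub_pow hx hax.le]
    exact one_add_mul_le_of_eqOn_zero hw (laplacian_truncCube_nonneg hU hc hb hh hΔ) hR hκ hz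
      (fun p hp ↦ hmax (ball_subset_closedBall hp))
      fun p hp ↦ truncCube_eq_zero fun hpU ↦ hle p ⟨hpU, hp⟩
  have hpos : 0 < truncCube U h a x' := hgain.trans_lt' <|
    mul_pos (by positivity) (pow_pos (sub_pos.2 hax) 3)
  obtain ⟨hx'U, hax'⟩ : x' ∈ U ∧ a < h x' := by
    by_contra! hcon
    exact hpos.ne' (truncCube_eq_zero hcon)
  exact ⟨x', hx'U, hax', hx'R, by rwa [truncCube_eq_sub_pow hx'U hax'.le] at hgain⟩

end Truncation

section HarnackChains

/-- `h` satisfies the Harnack inequality with constant `H` on the concentric balls of ratio `1 / 8`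
contained in `U`. -/
def SatisfiesHarnack {X : Type*} [PseudoMetricSpace X] (H : ℝ) (U : Set X) (h : X → ℝ) : Prop :=
  ∀ x R, 0 < R → ball x R ⊆ U → ∀ y, dist y x ≤ R / 8 → h y ≤ H * h x

lemma exists_dist_eq_of_le {X : Type*} [PseudoMetricSpace X] {γ : ℝ → X} {a b s : ℝ} (hab : a ≤ b)
    (hγ : ContinuousOn γ (Icc a b)) (hs : 0 ≤ s) (hle : s ≤ dist (γ a) (γ b)) :
    ∃ t ∈ Icc a b, dist (γ a) (γ t) = s :=
  intermediate_value_Icc hab ((continuous_const.dist continuous_id).comp_continuousOn hγ)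
    ⟨by simpa using hs, hle⟩

lemma le_pow_mul_of_eVariationOn_le {X : Type*} [PseudoMetricSpace X] {H : ℝ} {U : Set X}
    {h : X → ℝ} (hh : SatisfiesHarnack H U h) (hH : 1 ≤ H) {γ : ℝ → X} {b d : ℝ}
    (hd : 0 < d) (hb : 0 ≤ h (γ b)) (N : ℕ) {a : ℝ} (hab : a ≤ b) (hγ : ContinuousOn γ (Icc a b))
    (hball : ∀ t ∈ Icc a b, ball (γ t) (8 * d) ⊆ U)
    (hlen : eVariationOn γ (Icc a b) ≤ N * ENNReal.ofReal d) :
    h (γ a) ≤ H ^ (N + 1) * h (γ b) := by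
  have hstep : ∀ t ∈ Icc a b, dist (γ a) (γ t) ≤ d → h (γ a) ≤ H * h (γ t) := fun t ht hdist ↦
    hh (γ t) (8 * d) (by linarith) (hball t ht) (γ a) (by linarith)
  induction N generalizing a with
  | zero =>
    have hedist : edist (γ a) (γ b) ≤ 0 :=
      (eVariationOn.edist_le γ (left_mem_Icc.2 hab) (right_mem_Icc.2 hab)).trans
        (by simpa using hlen)
    have hdist : dist (γ a) (γ b) = 0 := by
      rw [dist_edist, nonpos_iff_eq_zero.1 hedist, ENNReal.toReal_zero]
    simpa using hstep b (right_mem_Icc.2 hab) (hdist.trans_le hd.le)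
  | succ N ih =>
    rcases le_or_gt (dist (γ a) (γ b)) d with hnear | hfar
    · refine (hstep b (right_mem_Icc.2 hab) hnear).trans ?_
      gcongr
      exact le_self_pow₀ hH (by omega)
    · obtain ⟨t, ht, hdist⟩ := exists_dist_eq_of_le hab hγ hd.le hfar.le
      have hsub : Icc t b ⊆ Icc a b := Icc_subset_Icc_left ht.1
      have hfirst : ENNReal.ofReal d ≤ eVariationOn γ (Icc a t) := by
        rw [← hdist, ← edist_dist]
        exact eVariationOn.edist_le γ (left_mem_Icc.2 ht.1) (right_mem_Icc.2 ht.1)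
      have hsplit :
          eVariationOn γ (Icc a t) + eVariationOn γ (Icc t b) = eVariationOn γ (Icc a b) := by
        simpa using eVariationOn.Icc_add_Icc γ (s := univ) ht.1 ht.2 (mem_univ t)
      have hrest : eVariationOn γ (Icc t b) ≤ N * ENNReal.ofReal d := by
        refine (ENNReal.add_le_add_iff_left (ENNReal.ofReal_ne_top (r := d))).1 ?_
        calc ENNReal.ofReal d + eVariationOn γ (Icc t b) ≤ eVariationOn γ (Icc a b) := by
              rw [← hsplit]; gcongr
          _ ≤ ENNReal.ofReal d + N * ENNReal.ofReal d := hlen.trans_eq (by push_cast; ring)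
      calc h (γ a) ≤ H * h (γ t) := hstep t ht hdist.le
        _ ≤ H * (H ^ (N + 1) * h (γ b)) := by
          gcongr
          exact ih ht.2 (hγ.mono hsub) (fun s hs ↦ hball s (hsub hs)) hrest
            fun s hs hdist ↦ hh (γ s) (8 * d) (by linarith) (hball s (hsub hs)) _ (by linarith)
        _ = H ^ (N + 1 + 1) * h (γ b) := by ring

lemma ball_infDist_frontier_subset {E : Type*} [SeminormedAddCommGroup E] [NormedSpace ℝ E]
    {U : Set E} (hU : IsOpen U) {z : E} (hz : z ∈ U) : ball z (infDist z (frontier U)) ⊆ U := by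
  rcases (infDist_nonneg (x := z) (s := frontier U)).eq_or_lt' with hzero | hpos
  · simp [hzero]
  refine (convex_ball z _).isPreconnected.subset_left_of_subset_union hU
    isClosed_closure.isOpen_compl (disjoint_compl_right.mono_left subset_closure) (fun v hv ↦ ?_)
    ⟨z, mem_ball_self hpos, hz⟩
  by_contra hv'
  simp only [mem_union, mem_compl_iff, not_or, not_not] at hv'
  exact disjoint_left.1 disjoint_ball_infDist hv (hU.frontier_eq ▸ ⟨hv'.2, hv'.1⟩)

variable {n : ℕ} {c C : ℝ} {U : Set (En n)}

lemma exists_dist_eq_and_le_infDist_frontier (hU : IsUniformDomain c C U) {x y : En n} (hx : x ∈ U)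
    (hy : y ∈ U) {s : ℝ} (hs : 0 ≤ s) (hsxy : 2 * s ≤ dist x y) :
    ∃ z ∈ U, dist x z = s ∧ c * s ≤ infDist z (frontier U) := by
  obtain ⟨γ, ⟨hγ, hγU, rfl, rfl⟩, -, hcig⟩ := hU.2.2 x hx y hy
  obtain ⟨t, ht, hdist⟩ := exists_dist_eq_of_le zero_le_one hγ hs (by linarith)
  have hfar : s ≤ dist (γ t) (γ 1) := by linarith [dist_triangle (γ 0) (γ t) (γ 1)]
  exact ⟨γ t, hγU ht, hdist, by simpa [hdist, min_eq_left hfar] using hcig t ht⟩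

/-- The Harnack chain constant of a `(c, C)`-uniform domain: it compares the values, at two points
of depth at least `ρ` and at distance at most `K * ρ` of each other, of a function satisfying the
Harnack inequality with constant `H`. -/
def harnackChainConst (H c C K : ℝ) : ℝ := H ^ (⌈16 * C * K / c⌉₊ + 1)

lemma IsUniformDomain.exists_curve_infDist_ge (hU : IsUniformDomain c C U) (hc : 0 < c)
    (hc1 : c ≤ 1) {p q : En n} (hp : p ∈ U) (hq : q ∈ U) {ρ : ℝ}
    (hρp : ρ ≤ infDist p (frontier U)) (hρq : ρ ≤ infDist q (frontier U)) :
    ∃ γ, IsCurveIn U p q γ ∧ curveLength γ ≤ ENNReal.ofReal (C * dist p q) ∧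
      ∀ t ∈ Icc (0 : ℝ) 1, c * ρ / 2 ≤ infDist (γ t) (frontier U) := by
  obtain ⟨γ, hγ, hlen, hcig⟩ := hU.2.2 p hp q hq
  refine ⟨γ, hγ, hlen, fun t ht ↦ ?_⟩
  have hδ : 0 ≤ infDist (γ t) (frontier U) := infDist_nonneg
  have hp_lip := infDist_le_infDist_add_dist (s := frontier U) (x := p) (y := γ t)
  have hq_lip := infDist_le_infDist_add_dist (s := frontier U) (x := q) (y := γ t)
  rw [dist_comm] at hq_lip
  rcases le_or_gt (ρ / 2) (min (dist p (γ t)) (dist (γ t) q)) with hfar | hnear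
  · nlinarith [hcig t ht]
  · rcases min_lt_iff.1 hnear with hnear | hnear <;> nlinarith

lemma IsUniformDomain.le_harnackChainConst_mul (hU : IsUniformDomain c C U) (hc : 0 < c)
    (hc1 : c ≤ 1) (hC : 0 ≤ C) {H : ℝ} (hH : 1 ≤ H) {h : En n → ℝ} (hh : SatisfiesHarnack H U h)
    {p q : En n} (hp : p ∈ U) (hq : q ∈ U) (hhq : 0 ≤ h q) {K ρ : ℝ} (hρ : 0 < ρ)
    (hρp : ρ ≤ infDist p (frontier U)) (hρq : ρ ≤ infDist q (frontier U))
    (hpq : dist p q ≤ K * ρ) : h p ≤ harnackChainConst H c C K * h q := by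
  obtain ⟨γ, ⟨hγ, hγU, rfl, rfl⟩, hlen, hdeep⟩ :=
    hU.exists_curve_infDist_ge hc hc1 hp hq hρp hρq
  refine le_pow_mul_of_eVariationOn_le hh hH (d := c * ρ / 16) (by positivity) hhq _ zero_le_one hγ
    (fun t ht ↦ ?_) (hlen.trans ?_)
  · exact (ball_subset_ball (by linarith [hdeep t ht])).trans
      (ball_infDist_frontier_subset hU.1 (hγU ht))
  · rw [← ENNReal.ofReal_natCast, ← ENNReal.ofReal_mul (by positivity)]
    refine ENNReal.ofReal_le_ofReal ?_
    calc C * dist (γ 0) (γ 1) ≤ C * (K * ρ) := by gcongr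
      _ = 16 * C * K / c * (c * ρ / 16) := by field_simp
      _ ≤ ⌈16 * C * K / c⌉₊ * (c * ρ / 16) := by
        gcongr
        exact Nat.le_ceil _

lemma IsUniformDomain.le_harnackChainConst_pow_mul (hU : IsUniformDomain c C U) (hc : 0 < c)
    (hc1 : c ≤ 1) (hC : 0 ≤ C) {H : ℝ} (hH : 1 ≤ H) {h : En n → ℝ} (hh : SatisfiesHarnack H U h)
    (hnonneg : ∀ z ∈ U, 0 ≤ h z) {q : En n} (hq : q ∈ U) {K ρ : ℝ} (hK : 0 ≤ K) (hρ : 0 < ρ)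
    (hρq : ρ ≤ infDist q (frontier U)) (k : ℕ) {z : En n} (hz : z ∈ U)
    (hρz : ρ / 2 ^ k ≤ infDist z (frontier U)) (hzq : dist z q ≤ (K + 2 / c / 2 ^ k) * ρ) :
    h z ≤ harnackChainConst H c C (K + 4 / c) ^ (k + 1) * h q := by
  set A := harnackChainConst H c C (K + 4 / c)
  have hA : 1 ≤ A := one_le_pow₀ hH
  have hhq : 0 ≤ h q := hnonneg q hq
  have h2c : 0 ≤ 2 / c := by positivity
  have h4c : 4 / c = 2 * (2 / c) := by ring
  induction k generalizing z with
  | zero =>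
    simp only [pow_zero, div_one, zero_add, pow_one] at hρz hzq ⊢
    refine hU.le_harnackChainConst_mul hc hc1 hC hH hh hz hq hhq hρ hρz hρq (hzq.trans ?_)
    gcongr
    norm_num
  | succ k ih =>
    set s := ρ / 2 ^ (k + 1) with hs_def
    have hs : 0 < s := by positivity
    have hsρ : s ≤ ρ := div_le_self hρ.le (one_le_pow₀ one_le_two)
    have h2s : 2 * s = ρ / 2 ^ k := by rw [hs_def, pow_succ]; field_simp
    rcases lt_or_ge (dist z q) (4 / c * s) with hnear | hfar
    · calc h z ≤ A * h q := hU.le_harnackChainConst_mul hc hc1 hC hH hh hz hq hhq hs hρz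
            (hsρ.trans hρq) (hnear.le.trans (by gcongr; linarith))
        _ ≤ A ^ (k + 1 + 1) * h q := by gcongr; exact le_self_pow₀ hA (by omega)
    · obtain ⟨z', hz', hdist, hdeep⟩ := exists_dist_eq_and_le_infDist_frontier hU hz hq
        (s := 2 / c * s) (by positivity) (hfar.trans' (by rw [h4c, mul_assoc]))
      have hdeep' : 2 * s ≤ infDist z' (frontier U) := hdeep.trans_eq' (by field_simp)
      have hz'q : dist z' q ≤ (K + 2 / c / 2 ^ k) * ρ := by
        have hsum : 2 / c * s + 2 / c / 2 ^ (k + 1) * ρ = 2 / c / 2 ^ k * ρ := by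
          rw [hs_def, pow_succ]; field_simp; ring
        linarith [dist_triangle_left z' q z]
      calc h z ≤ A * h z' := hU.le_harnackChainConst_mul hc hc1 hC hH hh hz hz' (hnonneg z' hz') hs
            hρz (by linarith) (hdist.trans_le (by gcongr; linarith))
        _ ≤ A * (A ^ (k + 1) * h q) := by gcongr; exact ih hz' (by linarith) hz'q
        _ = A ^ (k + 1 + 1) * h q := by ring

end HarnackChains

section CarlesonEstimate

open InnerProductSpace Laplacian Module

/-- A harmonic profile of `U`: a function continuous on the closure of `U`, positive and harmonic on
`U`, and vanishing on the boundary. -/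
structure IsHarmonicProfile {E : Type*} [NormedAddCommGroup E] [InnerProductSpace ℝ E]
    [FiniteDimensional ℝ E] (U : Set E) (h : E → ℝ) : Prop where
  continuousOn : ContinuousOn h (closure U)
  pos : ∀ z ∈ U, 0 < h z
  harmonicOnNhd : HarmonicOnNhd h U
  eq_zero : ∀ z ∈ frontier U, h z = 0

lemma IsHarmonicProfile.satisfiesHarnack {E : Type*} [NormedAddCommGroup E] [InnerProductSpace ℝ E]
    [FiniteDimensional ℝ E] [MeasurableSpace E] [BorelSpace E] {U : Set E} {h : E → ℝ}
    (hh : IsHarmonicProfile U h) : SatisfiesHarnack (4 / 3 * 4 ^ finrank ℝ E) U h :=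
  fun _ _ hR hsub _ hy ↦ harnack_inequality (fun z hz ↦ hh.harmonicOnNhd z (hsub hz))
    (fun z hz ↦ (hh.pos z (hsub hz)).le) hR hy

lemma IsHarmonicOn.harmonicOnNhd {n : ℕ} {U : Set (En n)} {h : En n → ℝ} (hh : IsHarmonicOn h U)
    (hU : IsOpen U) : HarmonicOnNhd h U := fun x hx ↦ by
  have hC2 : ∀ z ∈ U, ContDiffAt ℝ 2 h z := fun z hz ↦ hh.1.contDiffAt (hU.mem_nhds hz)
  refine ⟨hC2 x hx, ?_⟩
  filter_upwards [hU.mem_nhds hx] with z hz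
  have hdiff : DifferentiableAt ℝ (fderiv ℝ h) z :=
    ((hC2 z hz).fderiv_right (m := 1) le_rfl).differentiableAt one_ne_zero
  rw [laplacian_eq_sum_fderiv_fderiv (EuclideanSpace.basisFun (Fin n) ℝ), Pi.zero_apply,
    ← hh.2 z hz, lap]
  simp [fderiv_clm_apply hdiff (differentiableAt_const _)]

lemma exists_mem_half_infDist_le_dist {X : Type*} [PseudoMetricSpace X] {U : Set X}
    (hne : (frontier U).Nonempty) {q : X} (hq : q ∈ U) (x : X) :
    ∃ y ∈ U, infDist q (frontier U) / 2 ≤ dist x y := by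
  by_contra! hnear
  obtain ⟨b, hb⟩ := hne
  have hsub : closure U ⊆ closedBall x (infDist q (frontier U) / 2) :=
    closure_minimal (fun y hy ↦ mem_closedBall'.2 (hnear y hy).le) isClosed_closedBall
  linarith [infDist_le_dist_of_mem (x := q) hb, hnear q hq,
    mem_closedBall'.1 (hsub (frontier_subset_closure hb)), dist_triangle_left q b x]

lemma exists_dist_le_of_step {X : Type*} [PseudoMetricSpace X] {P : ℕ → X → Prop} {x₀ : X} {D : ℝ}
    (hD : 0 ≤ D) (hzero : P 0 x₀)
    (hstep : ∀ j x, P j x → dist x x₀ ≤ D → ∃ x', P (j + 1) x' ∧ dist x' x ≤ D / 2 / 2 ^ j)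
    (j : ℕ) : ∃ x, P j x ∧ dist x x₀ ≤ D := by
  have hsum : ∀ j, ∃ x, P j x ∧ dist x x₀ ≤ D - D / 2 ^ j := fun j ↦ by
    induction j with
    | zero => exact ⟨x₀, hzero, by simp⟩
    | succ j ih =>
      obtain ⟨x, hx, hdist⟩ := ih
      have hrem : 0 ≤ D / 2 ^ j := by positivity
      obtain ⟨x', hx', hdist'⟩ := hstep j x hx (by linarith)
      have hhalf : D / 2 / 2 ^ j = D / 2 ^ j / 2 := div_right_comm _ _ _
      have hsucc : D / 2 ^ (j + 1) = D / 2 ^ j / 2 := by rw [pow_succ, div_div]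
      exact ⟨x', hx', by linarith [dist_triangle x' x x₀]⟩
  obtain ⟨x, hx, hdist⟩ := hsum j
  exact ⟨x, hx, hdist.trans (sub_le_self _ (by positivity))⟩

variable {n : ℕ} {c C : ℝ} {U : Set (En n)} {h : En n → ℝ}

lemma IsHarmonicProfile.exists_mul_sub_pow_le (hh : IsHarmonicProfile U h)
    (hU : IsUniformDomain c C U) (hc : 0 < c) (hc1 : c ≤ 1) {a R : ℝ} (ha : 0 < a) (hR : 0 < R)
    {x : En n} (hx : x ∈ U) (hax : a < h x) (hfar : ∃ y ∈ U, R / 2 ≤ dist x y)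
    (hle : ∀ p ∈ U, c * R / 8 ≤ infDist p (frontier U) → dist p x ≤ R → h p ≤ a) :
    ∃ x' ∈ U, a < h x' ∧ dist x' x ≤ R ∧
      (1 + 3 / 4 * (c / 8) ^ n) * (h x - a) ^ 3 ≤ (h x' - a) ^ 3 := by
  obtain ⟨y, hy, hxy⟩ := hfar
  obtain ⟨z, -, hxz, hdeep⟩ :=
    exists_dist_eq_and_le_infDist_frontier hU hx hy (s := R / 4) (by linarith) (by linarith)
  rw [dist_comm] at hxz
  have hcR : c * R ≤ R := mul_le_of_le_one_left hR.le hc1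
  have hgain := exists_one_add_mul_sub_pow_le (a := a) (z := z) (κ := c / 8) hU.1 hh.continuousOn
    (fun b hb ↦ (hh.eq_zero b hb).trans_lt ha) hh.harmonicOnNhd.contDiffOn
    (fun p hp ↦ (hh.harmonicOnNhd p hp).2.eq_of_nhds.ge) hR (by positivity) (by linarith)
    (fun p hp ↦ ?_) hx hax
  · simpa using hgain
  · have hpz : dist p z < c / 8 * R := mem_ball.1 hp.2
    have hlip := infDist_le_infDist_add_dist (s := frontier U) (x := z) (y := p)
    rw [dist_comm] at hlip
    exact hle p hp.1 (by linarith) (by linarith [dist_triangle p z x])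

lemma IsHarmonicProfile.exists_pow_mul_sub_pow_le (hh : IsHarmonicProfile U h)
    (hU : IsUniformDomain c C U) (hc : 0 < c) (hc1 : c ≤ 1) {a R : ℝ} (ha : 0 < a) (hR : 0 < R)
    {x : En n} (hx : x ∈ U) (hax : a < h x) (hfar : ∀ x, ∃ y ∈ U, R / 2 ≤ dist x y) (m : ℕ)
    (hle : ∀ p ∈ U, c * R / 8 ≤ infDist p (frontier U) → dist p x ≤ m * R → h p ≤ a) :
    ∃ x' ∈ U, a < h x' ∧ dist x' x ≤ m * R ∧
      (1 + 3 / 4 * (c / 8) ^ n) ^ m * (h x - a) ^ 3 ≤ (h x' - a) ^ 3 := by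
  induction m with
  | zero => exact ⟨x, hx, hax, by simp, by simp⟩
  | succ m ih =>
    push_cast at hle ⊢
    obtain ⟨x₁, hx₁, hax₁, hdist₁, hgain₁⟩ := ih fun p hp hdeep hpx ↦ hle p hp hdeep (by linarith)
    obtain ⟨x₂, hx₂, hax₂, hdist₂, hgain₂⟩ :=
      hh.exists_mul_sub_pow_le hU hc hc1 ha hR hx₁ hax₁ (hfar x₁) fun p hp hdeep hpx₁ ↦
        hle p hp hdeep (by linarith [dist_triangle p x₁ x])
    refine ⟨x₂, hx₂, hax₂, by linarith [dist_triangle x₂ x₁ x], ?_⟩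
    refine hgain₂.trans' ?_
    rw [pow_succ', mul_assoc]
    gcongr

lemma IsHarmonicProfile.exists_mul_le (hh : IsHarmonicProfile U h)
    (hU : IsUniformDomain c C U) (hc : 0 < c) (hc1 : c ≤ 1) {a R : ℝ} (ha : 0 < a) (hR : 0 < R)
    {x : En n} (hx : x ∈ U) (hax : 2 * a ≤ h x) (hfar : ∀ x, ∃ y ∈ U, R / 2 ≤ dist x y) {m : ℕ}
    (hle : ∀ p ∈ U, c * R / 8 ≤ infDist p (frontier U) → dist p x ≤ m * R → h p ≤ a) {B : ℝ}
    (hB : B ^ 3 ≤ (1 + 3 / 4 * (c / 8) ^ n) ^ m) :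
    ∃ x' ∈ U, B * a ≤ h x' ∧ dist x' x ≤ m * R := by
  obtain ⟨x', hx', hax', hdist, hgain⟩ :=
    hh.exists_pow_mul_sub_pow_le hU hc hc1 ha hR hx (by linarith) hfar m hle
  have hcube : (B * a) ^ 3 ≤ (h x' - a) ^ 3 := hgain.trans' <| by
    rw [mul_pow]
    gcongr
    linarith
  have hsub : B * a ≤ h x' - a := le_of_pow_le_pow_left₀ three_ne_zero (sub_pos.2 hax').le hcube
  exact ⟨x', hx', by linarith, hdist⟩

/-- The comparison constant between a harmonic profile at a point `z` and at a point `q` of depth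
`ρ`, for each halving of the depth of `z` below `ρ`, as long as `z` stays within distance of order
`(K + 2) * ρ` of `q`. -/
def profileGrowthConst (n : ℕ) (c C K : ℝ) : ℝ :=
  harnackChainConst (4 / 3 * 4 ^ n) c C (K + 2 + 4 / c)

lemma one_lt_profileGrowthConst (n : ℕ) (c C K : ℝ) : 1 < profileGrowthConst n c C K := by
  have h4 : (1 : ℝ) ≤ 4 ^ n := one_le_pow₀ (by norm_num)
  exact one_lt_pow₀ (by linarith) (Nat.succ_ne_zero _)

lemma IsHarmonicProfile.le_profileGrowthConst_pow_mul (hh : IsHarmonicProfile U h)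
    (hU : IsUniformDomain c C U) (hc : 0 < c) (hc1 : c ≤ 1) (hC : 0 ≤ C) {K : ℝ} (hK : 0 ≤ K)
    {q p : En n} (hq : q ∈ U) (hp : p ∈ U) (hρ : 0 < infDist q (frontier U)) (k : ℕ)
    (hdeep : infDist q (frontier U) / 2 ^ k ≤ infDist p (frontier U))
    (hpq : dist p q ≤ (K + 2) * infDist q (frontier U)) :
    h p ≤ profileGrowthConst n c C K ^ (k + 1) * h q := by
  have hH : (1 : ℝ) ≤ 4 / 3 * 4 ^ n := by
    linarith [one_le_pow₀ (by norm_num : (1 : ℝ) ≤ 4) (n := n)]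
  refine hU.le_harnackChainConst_pow_mul (K := K + 2) hc hc1 hC hH
    (by simpa using hh.satisfiesHarnack) (fun z hz ↦ (hh.pos z hz).le) hq
    (by positivity) hρ le_rfl k hp hdeep (hpq.trans ?_)
  exact mul_le_mul_of_nonneg_right (le_add_of_nonneg_right (by positivity)) hρ.le

lemma IsHarmonicProfile.exists_two_mul_pow_mul_le (hh : IsHarmonicProfile U h)
    (hne : (frontier U).Nonempty) (hU : IsUniformDomain c C U) (hc : 0 < c) (hc1 : c ≤ 1)
    (hC : 0 ≤ C) {K : ℝ} (hK : 0 ≤ K) {q x : En n} (hq : q ∈ U) (hx : x ∈ U) {k m j : ℕ}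
    (hm : (2 * profileGrowthConst n c C K) ^ 3 ≤ (1 + 3 / 4 * (c / 8) ^ n) ^ m)
    (hk : 16 * (m + 1) ≤ c * 2 ^ k) (hxq : dist x q ≤ (K + 1) * infDist q (frontier U))
    (hqx : 2 * profileGrowthConst n c C K ^ (k + j + 1) * h q ≤ h x) :
    ∃ x' ∈ U, 2 * profileGrowthConst n c C K ^ (k + (j + 1) + 1) * h q ≤ h x' ∧
      dist x' x ≤ infDist q (frontier U) / 2 / 2 ^ j := by
  have hB := one_lt_profileGrowthConst n c C K
  have hhq : 0 < h q := hh.pos q hq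
  have hρ : 0 < infDist q (frontier U) :=
    (isClosed_frontier.notMem_iff_infDist_pos hne).1 fun hqU ↦ (hh.eq_zero q hqU).not_gt hhq
  set B := profileGrowthConst n c C K
  set ρ := infDist q (frontier U)
  set R := 8 * ρ / (c * 2 ^ (k + j)) with hR_def
  have hR : 0 < R := by positivity
  have hdeep : c * R / 8 = ρ / 2 ^ (k + j) := by rw [hR_def]; field_simp
  have hmR : (m + 1) * R ≤ ρ / 2 / 2 ^ j :=
    calc (m + 1) * R = 16 * (m + 1) / (c * 2 ^ k) * (ρ / 2 / 2 ^ j) := by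
          rw [hR_def, pow_add]; field_simp; norm_num
      _ ≤ 1 * (ρ / 2 / 2 ^ j) := by
          gcongr
          exact (div_le_one (by positivity)).2 hk
      _ = ρ / 2 / 2 ^ j := one_mul _
  have hhalf : ρ / 2 / 2 ^ j ≤ ρ / 2 := div_le_self (by positivity) (one_le_pow₀ one_le_two)
  have hm_nonneg : 0 ≤ m * R := by positivity
  have hfar : ∀ x, ∃ y ∈ U, R / 2 ≤ dist x y := fun x ↦ by
    obtain ⟨y, hy, hxy⟩ := exists_mem_half_infDist_le_dist hne hq x
    exact ⟨y, hy, hxy.trans' (by linarith)⟩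
  obtain ⟨x', hx', hle, hdist⟩ := hh.exists_mul_le hU hc hc1 (a := B ^ (k + j + 1) * h q)
    (by positivity) hR hx (by linarith) hfar (fun p hp hpdeep hpx ↦
      hh.le_profileGrowthConst_pow_mul hU hc hc1 hC hK hq hp hρ (k + j) (hdeep ▸ hpdeep)
        (by linarith [dist_triangle p x q])) hm
  exact ⟨x', hx', hle.trans_eq' (by ring), by linarith⟩

lemma IsHarmonicProfile.le_two_mul_pow_mul (hh : IsHarmonicProfile U h)
    (hne : (frontier U).Nonempty) (hU : IsUniformDomain c C U) (hc : 0 < c) (hc1 : c ≤ 1)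
    (hC : 0 ≤ C) {K : ℝ} (hK : 0 ≤ K) {q y : En n} (hq : q ∈ U) (hy : y ∈ U) {k m : ℕ}
    (hm : (2 * profileGrowthConst n c C K) ^ 3 ≤ (1 + 3 / 4 * (c / 8) ^ n) ^ m)
    (hk : 16 * (m + 1) ≤ c * 2 ^ k) (hyq : dist y q ≤ K * infDist q (frontier U)) :
    h y ≤ 2 * profileGrowthConst n c C K ^ (k + 1) * h q := by
  by_contra! hlt
  set B := profileGrowthConst n c C K
  set ρ := infDist q (frontier U)
  have hhq : 0 < h q := hh.pos q hq
  have hseq := exists_dist_le_of_step (x₀ := y) (D := ρ) infDist_nonneg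
    (P := fun j x ↦ x ∈ U ∧ 2 * B ^ (k + j + 1) * h q ≤ h x) ⟨hy, hlt.le⟩ fun j x hx hxy ↦ by
      obtain ⟨x', hx', hle, hdist⟩ := hh.exists_two_mul_pow_mul_le hne hU hc hc1 hC hK hq hx.1 hm hk
        (by linarith [dist_triangle x y q]) hx.2
      exact ⟨x', ⟨hx', hle⟩, hdist⟩
  obtain ⟨M, hM⟩ := ((isCompact_closedBall y ρ).inter_left isClosed_closure
    ).exists_bound_of_continuousOn (hh.continuousOn.mono inter_subset_left)
  obtain ⟨j, hj⟩ := pow_unbounded_of_one_lt (M / h q) (one_lt_profileGrowthConst n c C K)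
  obtain ⟨x, ⟨hx, hle⟩, hdist⟩ := hseq j
  have hbound : h x ≤ M := (le_abs_self _).trans (hM x ⟨subset_closure hx, hdist⟩)
  refine hbound.not_gt ?_
  calc M < B ^ j * h q := (div_lt_iff₀ hhq).1 hj
    _ ≤ 2 * B ^ (k + j + 1) * h q := by
      gcongr
      have hB : 1 ≤ B := (one_lt_profileGrowthConst n c C K).le
      calc B ^ j ≤ B ^ (k + j + 1) := pow_le_pow_right₀ hB (by omega)
        _ ≤ 2 * B ^ (k + j + 1) := le_mul_of_one_le_left (by positivity) one_le_two
    _ ≤ h x := hle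

lemma dist_le_of_innerDist_le {X : Type*} [PseudoMetricSpace X] {U : Set X} {x y : X} {s : ℝ}
    (hs : 0 ≤ s) (hxy : innerDist U x y ≤ ENNReal.ofReal s) : dist x y ≤ s := by
  rw [← ENNReal.ofReal_le_ofReal_iff hs, ← edist_dist]
  refine hxy.trans' (le_iInf₂ fun γ hγ ↦ ?_)
  obtain ⟨-, -, rfl, rfl⟩ := hγ
  exact eVariationOn.edist_le _ (left_mem_Icc.2 zero_le_one) (right_mem_Icc.2 zero_le_one)

lemma dist_le_div_mul_of_innerDist_le {X : Type*} [PseudoMetricSpace X] {U : Set X} {x y q : X}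
    {c r δ : ℝ} (hc : 0 < c) (hr : 0 ≤ r) (hδ : c * r / 8 ≤ δ)
    (hxq : innerDist U x q ≤ ENNReal.ofReal (r / 4)) (hxy : innerDist U x y ≤ ENNReal.ofReal r) :
    dist y q ≤ 10 / c * δ :=
  calc dist y q ≤ dist x y + dist x q := dist_triangle_left y q x
    _ ≤ r + r / 4 :=
      add_le_add (dist_le_of_innerDist_le hr hxy) (dist_le_of_innerDist_le (by positivity) hxq)
    _ = 10 / c * (c * r / 8) := by field_simp; ring
    _ ≤ 10 / c * δ := by gcongr

end CarlesonEstimate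

theorem statement2_general (n : ℕ) {c C K : ℝ} (hc : 0 < c) (hc1 : c ≤ 1) (hC : 0 ≤ C)
    (hK : 0 ≤ K) :
    ∃ A : ℝ, 1 < A ∧
      ∀ U : Set (En n), (frontier U).Nonempty → IsUniformDomain c C U →
        ∀ h : En n → ℝ, IsHarmonicProfile U h →
          ∀ q ∈ U, ∀ y ∈ U, dist y q ≤ K * infDist q (frontier U) → h y ≤ A * h q := by
  have hB := one_lt_profileGrowthConst n c C K
  have hgain : 1 < 1 + 3 / 4 * (c / 8) ^ n := lt_add_of_pos_right _ (by positivity)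
  obtain ⟨m, hm⟩ := pow_unbounded_of_one_lt ((2 * profileGrowthConst n c C K) ^ 3) hgain
  obtain ⟨k, hk⟩ := pow_unbounded_of_one_lt (16 * (m + 1) / c) one_lt_two
  refine ⟨2 * profileGrowthConst n c C K ^ (k + 1), by linarith [one_le_pow₀ hB.le (n := k + 1)],
    fun U hne hU h hh q hq y hy hyq ↦ ?_⟩
  exact hh.le_two_mul_pow_mul hne hU hc hc1 hC hK hq hy hm.le ((div_lt_iff₀' hc).1 hk).le hyq

/-- Control of a harmonic profile on inner balls of an unbounded uniform domain:
`h(y) ≤ A₁ h(x_r)` for `y` in the inner ball `B_U(x,r)`, where `x_r` is an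
interior point with `d_U(x,x_r) ≤ r/4` and `dist(x_r,∂U) ≥ c_u r/8`. -/
theorem statement2 (n : ℕ) (hn : 1 ≤ n) (cu Cu : ℝ)
    (hcu : cu ∈ Set.Ioo (0:ℝ) 1) (hCu : 1 < Cu) :
    ∃ A₁ : ℝ, 1 < A₁ ∧
      ∀ U : Set (En n), U ≠ Set.univ → (frontier U).Nonempty →
        ¬ Bornology.IsBounded U → IsUniformDomain cu Cu U →
        ∀ h : En n → ℝ, ContinuousOn h (closure U) → (∀ z ∈ U, 0 < h z) →
          IsHarmonicOn h U → (∀ z ∈ frontier U, h z = 0) →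
          ∀ x ∈ U, ∀ r : ℝ, 0 < r →
            ∀ xr ∈ U, innerDist U x xr ≤ ENNReal.ofReal (r / 4) →
              cu * r / 8 ≤ Metric.infDist xr (frontier U) →
              ∀ y ∈ U, innerDist U x y < ENNReal.ofReal r → h y ≤ A₁ * h xr := by
  obtain ⟨A, hA, hle⟩ := statement2_general n hcu.1 hcu.2.le (zero_le_one.trans hCu.le)
    (div_nonneg (by norm_num : (0 : ℝ) ≤ 10) hcu.1.le)
  exact ⟨A, hA, fun U _ hne _ hU h hc hpos hh hb x _ r hr xr hxr hxxr hδ y hy hxy ↦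
    hle U hne hU h ⟨hc, hpos, hh.harmonicOnNhd hU.1, hb⟩ xr hxr y hy
      (dist_le_div_mul_of_innerDist_le hcu.1 hr.le hδ hxxr hxy.le)⟩
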